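/- arXiv:2605.03760 — 2 statements merged into one kernel-verified Lean document; each statement's English description precedes it below -/
import Mathlib

section
/- Single-arc extension preserves feasibility and weak dominance: let l1 = (i, c1, S1, R1) and l2 = (i, c2, S2, R2) be labels at the same node i such that l1 weakly dominates l2, and let j ∈ N. If the extension of l2 along the arc (i, j) is feasible, then the extension of l1 along (i, j) is also feasible, and ext_j(l1) weakly dominates ext_j(l2). -/
/-- A label at a node over node set `N` with `k` resources. -/
structure Label (N : Type*) (k : ℕ) where
  node : N
  cost : ℝ
  visited : Finset N
  res : Fin k → ℝ

/-- `l1` weakly dominates `l2`: same node and componentwise ≤. -/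
def WeakDom {N : Type*} {k : ℕ} (l1 l2 : Label N k) : Prop :=
  l1.node = l2.node ∧ l1.cost ≤ l2.cost ∧ l1.visited ⊆ l2.visited ∧
    ∀ r, l1.res r ≤ l2.res r

/-- Extension of a label along the arc from its node to `j`. -/
def extLabel {N : Type*} [DecidableEq N] {k : ℕ}
    (cost : N → N → ℝ) (cons : N → N → Fin k → ℝ) (j : N) (l : Label N k) :
    Label N k :=
  ⟨j, l.cost + cost l.node j, insert j l.visited,
    fun r => l.res r + cons l.node j r⟩

/-- The extension of `l` along the arc to `j` is feasible. -/
def FeasibleExt {N : Type*} {k : ℕ}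
    (cons : N → N → Fin k → ℝ) (W : Fin k → ℝ) (j : N) (l : Label N k) : Prop :=
  j ∉ l.visited ∧ ∀ r, l.res r + cons l.node j r ≤ W r

/-- Single-arc extension preserves feasibility and weak dominance. -/
theorem ext_preserves_weakDom {N : Type*} [DecidableEq N] {k : ℕ}
    (cost : N → N → ℝ) (cons : N → N → Fin k → ℝ) (W : Fin k → ℝ)
    (hcons : ∀ i j r, 0 ≤ cons i j r)
    (l1 l2 : Label N k) (h : WeakDom l1 l2) (j : N)
    (hfeas : FeasibleExt cons W j l2) :
    FeasibleExt cons W j l1 ∧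
      WeakDom (extLabel cost cons j l1) (extLabel cost cons j l2) := by
  obtain ⟨hn, hc, hS, hR⟩ := h
  obtain ⟨hj, hW⟩ := hfeas
  -- Since the end nodes agree, both labels incur the same arc cost and consumption.
  simp only [FeasibleExt, WeakDom, extLabel, hn]
  have hext : ∀ r, l1.res r + cons l2.node j r ≤ l2.res r + cons l2.node j r :=
    fun r => add_le_add_left (hR r) _
  exact ⟨⟨fun hmem => hj (hS hmem), fun r => (hext r).trans (hW r)⟩,
    trivial, add_le_add_left hc _, Finset.insert_subset_insert j hS, hext⟩
end

section
/- Dominated labels can be safely discarded along any completion: let l1 = (i, c1, S1, R1) and l2 = (i, c2, S2, R2) be labels at the same node i such that l1 weakly dominates l2, and let (j1, ..., jm) be a sequence of nodes of N. If the iterated extension of l2 along (j1, ..., jm) is feasible (every intermediate single-arc extension is feasible), then the iterated extension of l1 along (j1, ..., jm) is also feasible, ends at the same node jm, and its cost is at most the cost of the iterated extension of l2. -/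
/-- Iterated extension of a label along a sequence of nodes. -/
def extPath {N : Type*} [DecidableEq N] {k : ℕ}
    (cost : N → N → ℝ) (cons : N → N → Fin k → ℝ) :
    Label N k → List N → Label N k
  | l, [] => l
  | l, j :: js => extPath cost cons (extLabel cost cons j l) js

/-- Feasibility of the iterated extension: every intermediate single-arc
extension is feasible. -/
def FeasiblePath {N : Type*} [DecidableEq N] {k : ℕ}
    (cost : N → N → ℝ) (cons : N → N → Fin k → ℝ) (W : Fin k → ℝ) :
    Label N k → List N → Prop
  | _, [] => True
  | l, j :: js => FeasibleExt cons W j l ∧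
      FeasiblePath cost cons W (extLabel cost cons j l) js

theorem WeakDom.extLabel {N : Type*} [DecidableEq N] {k : ℕ}
    (cost : N → N → ℝ) (cons : N → N → Fin k → ℝ) (j : N) {l1 l2 : Label N k}
    (h : WeakDom l1 l2) :
    WeakDom (extLabel cost cons j l1) (extLabel cost cons j l2) := by
  obtain ⟨hn, hc, hS, hR⟩ := h
  refine ⟨rfl, ?_, Finset.insert_subset_insert j hS, fun r => ?_⟩
  · simpa [_root_.extLabel, hn] using hc
  · simpa [_root_.extLabel, hn] using hR r

theorem WeakDom.feasibleExt {N : Type*} {k : ℕ}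
    {cons : N → N → Fin k → ℝ} {W : Fin k → ℝ} {j : N} {l1 l2 : Label N k}
    (h : WeakDom l1 l2) (hf : FeasibleExt cons W j l2) : FeasibleExt cons W j l1 := by
  obtain ⟨hn, -, hS, hR⟩ := h
  refine ⟨fun hj => hf.1 (hS hj), fun r => ?_⟩
  rw [hn]
  linarith [hR r, hf.2 r]

theorem WeakDom.extPath {N : Type*} [DecidableEq N] {k : ℕ}
    (cost : N → N → ℝ) (cons : N → N → Fin k → ℝ) (js : List N) {l1 l2 : Label N k}
    (h : WeakDom l1 l2) : WeakDom (extPath cost cons l1 js) (extPath cost cons l2 js) := by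
  induction js generalizing l1 l2 with
  | nil => exact h
  | cons j js ih => exact ih (h.extLabel cost _ j)

theorem WeakDom.feasiblePath {N : Type*} [DecidableEq N] {k : ℕ}
    {cost : N → N → ℝ} {cons : N → N → Fin k → ℝ} {W : Fin k → ℝ} {js : List N}
    {l1 l2 : Label N k} (h : WeakDom l1 l2) (hf : FeasiblePath cost cons W l2 js) :
    FeasiblePath cost cons W l1 js := by
  induction js generalizing l1 l2 with
  | nil => trivial
  | cons j js ih => exact ⟨h.feasibleExt hf.1, ih (h.extLabel cost _ j) hf.2⟩

/-- Dominated labels can be safely discarded along any completion. -/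
theorem weakDom_completion {N : Type*} [DecidableEq N] {k : ℕ}
    (cost : N → N → ℝ) (cons : N → N → Fin k → ℝ) (W : Fin k → ℝ)
    (hcons : ∀ i j r, 0 ≤ cons i j r)
    (l1 l2 : Label N k) (h : WeakDom l1 l2) (js : List N)
    (hfeas : FeasiblePath cost cons W l2 js) :
    FeasiblePath cost cons W l1 js ∧
      (extPath cost cons l1 js).node = (extPath cost cons l2 js).node ∧
      (extPath cost cons l1 js).cost ≤ (extPath cost cons l2 js).cost := by
  exact ⟨h.feasiblePath hfeas, (h.extPath cost cons js).1, (h.extPath cost cons js).2.1⟩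
end
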